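/- Let N ≥ 2 and let g : ℝ → ℝ be any function that is unbounded below on (−∞, 0] (for instance any increasing bijection of ℝ). Then there exists X ∈ 𝕊(N) with X ≤ I such that −F₁(e_N, X) > g(λ₁(X)). (One may take X = diag(1, 1, …, 1, c) for a suitable c ≤ 0, for which λ₁(X) = c and −F₁(e_N, X) = N − 1.) In particular, the 1-Laplace function F₁ does not belong to Class M. -/

import Mathlib

open Matrix

/-- The Loewner partial order on matrices: `X ≤ Y` iff `Y - X` is positive semidefinite. -/
def Loewner {n : Type*} [Fintype n] (X Y : Matrix n n ℝ) : Prop := (Y - X).PosSemidef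

/-- The eigenvalues of a real symmetric matrix, listed in increasing order. -/
noncomputable def eigs {N : ℕ} (X : Matrix (Fin N) (Fin N) ℝ) : Fin N → ℝ :=
  if h : X.IsHermitian then h.eigenvalues ∘ Tuple.sort h.eigenvalues else 0

/-- The smallest eigenvalue of a real symmetric matrix. -/
noncomputable def lam1 {N : ℕ} (X : Matrix (Fin N) (Fin N) ℝ) : ℝ := ⨅ i, eigs X i

/-- The largest eigenvalue of a real symmetric matrix. -/
noncomputable def lamN {N : ℕ} (X : Matrix (Fin N) (Fin N) ℝ) : ℝ := ⨆ i, eigs X i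

/-- The p-Laplace function
`F_p(ν, X) = −|ν|^{p−2} (tr X + (p−2) ⟨Xν, ν⟩ / |ν|²)`. -/
noncomputable def Fp {N : ℕ} (p : ℝ) (ν : EuclideanSpace ℝ (Fin N))
    (X : Matrix (Fin N) (Fin N) ℝ) : ℝ :=
  -(‖ν‖ ^ (p - 2)) * (X.trace +
    (p - 2) * (X.mulVec ((WithLp.equiv 2 (Fin N → ℝ)) ν) ⬝ᵥ (WithLp.equiv 2 (Fin N → ℝ)) ν)
      / ‖ν‖ ^ (2 : ℕ))

/-!
At `p = 1` the coefficient `p - 2 = -1` cancels the pure second derivative in the direction of `ν`,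
so `-F₁(e_i, X)` is the sum of the diagonal entries of `X` other than `X i i`. Replacing the `i`-th
diagonal entry of the identity by some `c ≤ 1` therefore leaves `-F₁(e_i, X)` at `N - 1`, while
`λ₁(X) = c` can be pushed to where `g` is smaller than `N - 1`.
-/

lemma lam1_eq_iInf_eigenvalues {N : ℕ} {X : Matrix (Fin N) (Fin N) ℝ} (hX : X.IsHermitian) :
    lam1 X = ⨅ i, hX.eigenvalues i := by
  rw [lam1, eigs, dif_pos hX]
  exact (Tuple.sort hX.eigenvalues).iInf_comp

lemma lam1_diagonal {N : ℕ} (d : Fin N → ℝ) : lam1 (diagonal d) = ⨅ i, d i := by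
  have hd : (diagonal d).IsHermitian := isHermitian_diagonal d
  rw [lam1_eq_iInf_eigenvalues hd, iInf, ← hd.spectrum_real_eq_range_eigenvalues,
    spectrum_diagonal, iInf]

lemma loewner_diagonal_iff {n : Type*} [Fintype n] [DecidableEq n] {d e : n → ℝ} :
    Loewner (diagonal d) (diagonal e) ↔ d ≤ e := by
  simp only [Loewner, diagonal_sub, posSemidef_diagonal_iff, sub_nonneg, Pi.le_def]

lemma neg_Fp_single {N : ℕ} (p : ℝ) (i : Fin N) (X : Matrix (Fin N) (Fin N) ℝ) :
    -Fp p (EuclideanSpace.single i (1 : ℝ)) X = X.trace + (p - 2) * X i i := by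
  simp [Fp]

lemma neg_Fp_one_single {N : ℕ} (i : Fin N) (X : Matrix (Fin N) (Fin N) ℝ) :
    -Fp 1 (EuclideanSpace.single i (1 : ℝ)) X = ∑ j ∈ Finset.univ.erase i, X j j := by
  have htrace : X i i + ∑ j ∈ Finset.univ.erase i, X j j = X.trace :=
    Finset.add_sum_erase _ (fun j ↦ X j j) (Finset.mem_univ i)
  rw [neg_Fp_single]
  linarith

lemma neg_Fp_one_single_diagonal_update {N : ℕ} (i : Fin N) (d : Fin N → ℝ) (c : ℝ) :
    -Fp 1 (EuclideanSpace.single i (1 : ℝ)) (diagonal (Function.update d i c)) =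
      ∑ j ∈ Finset.univ.erase i, d j := by
  rw [neg_Fp_one_single]
  refine Finset.sum_congr rfl fun j hj ↦ ?_
  rw [diagonal_apply_eq, Function.update_of_ne (Finset.ne_of_mem_erase hj)]

lemma iInf_update_of_forall_le {ι α : Type*} [DecidableEq ι] [ConditionallyCompleteLattice α]
    {f : ι → α} {a : α} (i : ι) (ha : ∀ j ≠ i, a ≤ f j) : ⨅ j, Function.update f i a j = a := by
  refine IsLeast.csInf_eq ⟨⟨i, Function.update_self i a f⟩, Set.forall_mem_range.2 ?_⟩
  exact le_update_iff.2 ⟨le_rfl, ha⟩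

theorem oneLaplace_not_classM_general {N : ℕ} (i : Fin N) (g : ℝ → ℝ)
    (hg : ∃ t ≤ 1, g t < (N : ℝ) - 1) :
    ∃ X : Matrix (Fin N) (Fin N) ℝ, X.IsHermitian ∧
      Loewner X (1 : Matrix (Fin N) (Fin N) ℝ) ∧
      -Fp 1 (EuclideanSpace.single i (1 : ℝ)) X > g (lam1 X) := by
  obtain ⟨c, hc, hgc⟩ := hg
  let d : Fin N → ℝ := Function.update 1 i c
  have hle : d ≤ 1 := update_le_self_iff.2 hc
  have hlam : lam1 (diagonal d) = c :=
    (lam1_diagonal d).trans (iInf_update_of_forall_le i fun _ _ ↦ hc)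
  have hF : -Fp 1 (EuclideanSpace.single i (1 : ℝ)) (diagonal d) = N - 1 := by
    have hN : 1 ≤ N := i.pos
    simp [d, neg_Fp_one_single_diagonal_update, Nat.cast_sub hN]
  refine ⟨diagonal d, isHermitian_diagonal d, ?_, ?_⟩
  · rw [← diagonal_one]
    exact loewner_diagonal_iff.2 hle
  · rwa [hF, hlam]

/-- The 1-Laplace function violates condition (3) of Class M (with `M = I`):
for any `g` unbounded below on `(−∞, 0]` there is `X ≤ I` with `−F₁(e_N, X) > g(λ₁(X))`. -/
theorem oneLaplace_not_classM {N : ℕ} (hN : 2 ≤ N)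
    (g : ℝ → ℝ) (hg : ∀ C : ℝ, ∃ t : ℝ, t ≤ 0 ∧ g t < C) :
    ∃ X : Matrix (Fin N) (Fin N) ℝ, X.IsHermitian ∧
      Loewner X (1 : Matrix (Fin N) (Fin N) ℝ) ∧
      -Fp 1 (EuclideanSpace.single (⟨N - 1, by omega⟩ : Fin N) (1 : ℝ)) X > g (lam1 X) := by
  obtain ⟨t, ht, hgt⟩ := hg (N - 1)
  exact oneLaplace_not_classM_general _ g ⟨t, ht.trans zero_le_one, hgt⟩
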